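/- Let p be a prime and A = ZMod p × ZMod p². Define the braiding B((j,n),(l,m)) = exp(2πi·(j.val·m.val + n.val·l.val)/p) (the braiding of the ℤ_p × ℤ_{p²} anyon theory with θ((j,n)) = exp(2πi·j.val·n.val/p)). Then there do not exist elements b, c ∈ A such that b has additive order p, c has additive order p², B(b,c) = 1, and b and c together generate A (i.e. AddSubgroup.closure {b, c} = ⊤). In other words, the ℤ_p × ℤ_{p²} anyon theory cannot be decomposed into a ℤ_p subtheory and a ℤ_{p²} subtheory with trivially braiding generators. -/

import Mathlib

/-- The bilinear braiding of the `ℤ_p × ℤ_{p²}` anyon theory on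
`ZMod p × ZMod p²`: `B((j,n),(l,m)) = exp(2πi(jm + nl)/p)`. -/
noncomputable def braidZpZpsq (p : ℕ) (x y : ZMod p × ZMod (p ^ 2)) : ℂ :=
  Complex.exp (2 * Real.pi * Complex.I *
    ((x.1.val : ℂ) * (y.2.val : ℂ) + (x.2.val : ℂ) * (y.1.val : ℂ)) / (p : ℂ))

/-!
Reduce the second coordinate modulo `n`, landing in the free module `(ℤ/n)²`. An element `b` with
`n • b = 0` reduces to `(j, 0)`, so if `c` reduces to `(l, m)`, the exponent `jm` of the braiding of
`b` with `c` is the determinant of the two reductions. If `b` and `c` generate the fusion group,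
their reductions span `(ℤ/n)²` and this determinant is a unit. For `n > 1` it is then nonzero, so
the braiding is nontrivial.
-/

theorem isUnit_det_of_span_pair_eq_top {R : Type*} [CommRing R] {u v : R × R}
    (h : Submodule.span R {u, v} = ⊤) : IsUnit (u.1 * v.2 - u.2 * v.1) := by
  have exists_coeffs (w : R × R) : ∃ s t : R, s • u + t • v = w :=
    Submodule.mem_span_pair.1 (h ▸ Submodule.mem_top)
  obtain ⟨s₁, t₁, h₁⟩ := exists_coeffs (1, 0)
  obtain ⟨s₂, t₂, h₂⟩ := exists_coeffs (0, 1)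
  obtain ⟨h₁₁, h₁₂⟩ := Prod.ext_iff.1 h₁
  obtain ⟨h₂₁, h₂₂⟩ := Prod.ext_iff.1 h₂
  simp only [Prod.fst_add, Prod.snd_add, Prod.smul_fst, Prod.smul_snd, smul_eq_mul]
    at h₁₁ h₁₂ h₂₁ h₂₂
  -- Multiplicativity of the determinant: the coefficient matrix inverts the matrix of `u` and `v`.
  refine .of_mul_eq_one (s₁ * t₂ - t₁ * s₂) ?_
  calc (u.1 * v.2 - u.2 * v.1) * (s₁ * t₂ - t₁ * s₂)
    _ = (s₁ * u.1 + t₁ * v.1) * (s₂ * u.2 + t₂ * v.2)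
        - (s₁ * u.2 + t₁ * v.2) * (s₂ * u.1 + t₂ * v.1) := by ring
    _ = 1 := by rw [h₁₁, h₁₂, h₂₁, h₂₂]; ring

theorem span_image_eq_top_of_addSubgroup_closure_eq_top {R A M : Type*} [Ring R] [AddGroup A]
    [AddCommGroup M] [Module R M] {f : A →+ M} (hf : Function.Surjective f) {s : Set A}
    (hs : AddSubgroup.closure s = ⊤) : Submodule.span R (f '' s) = ⊤ := by
  have closure_image : AddSubgroup.closure (f '' s) = ⊤ := by
    rw [← AddMonoidHom.map_closure, hs, AddSubgroup.map_top_of_surjective f hf]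
  have closure_le : AddSubgroup.closure (f '' s) ≤ (Submodule.span R (f '' s)).toAddSubgroup :=
    (AddSubgroup.closure_le _).2 Submodule.subset_span
  exact eq_top_iff.2 fun x _ ↦ closure_le (closure_image ▸ AddSubgroup.mem_top x)

theorem castHom_eq_zero_of_nsmul_eq_zero {k m n : ℕ} (hk : k ≠ 0) (h : k * n ∣ m) {x : ZMod m}
    (hx : k • x = 0) : ZMod.castHom (dvd_of_mul_left_dvd h) (ZMod n) x = 0 := by
  obtain ⟨a, rfl⟩ := ZMod.intCast_surjective x
  have m_dvd : (m : ℤ) ∣ k * a := by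
    rw [← ZMod.intCast_zmod_eq_zero_iff_dvd]
    simpa using hx
  have k_mul_n_dvd : (k * n : ℤ) ∣ k * a := (mod_cast h : (k * n : ℤ) ∣ m).trans m_dvd
  rw [map_intCast, ZMod.intCast_zmod_eq_zero_iff_dvd]
  exact Int.dvd_of_mul_dvd_mul_left (mod_cast hk) k_mul_n_dvd

section ReduceSnd

variable (n : ℕ)

/-- Reduction modulo `n` of the second coordinate of the fusion group `ℤ/n × ℤ/n²`. The braiding
depends on its arguments only through their images in `(ℤ/n)²`. -/
def reduceSnd : ZMod n × ZMod (n ^ 2) →+* ZMod n × ZMod n :=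
  (RingHom.id (ZMod n)).prodMap (ZMod.castHom (dvd_pow_self n two_ne_zero) (ZMod n))

theorem reduceSnd_surjective : Function.Surjective (reduceSnd n) :=
  Function.surjective_id.prodMap (ZMod.castHom_surjective (dvd_pow_self n two_ne_zero))

variable {n}

theorem reduceSnd_snd_eq_zero_of_nsmul_eq_zero (hn : n ≠ 0) {x : ZMod n × ZMod (n ^ 2)}
    (hx : n • x = 0) : (reduceSnd n x).2 = 0 :=
  castHom_eq_zero_of_nsmul_eq_zero hn (pow_two n).symm.dvd (congrArg Prod.snd hx)

theorem braidZpZpsq_eq_stdAddChar [NeZero n] (x y : ZMod n × ZMod (n ^ 2)) :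
    braidZpZpsq n x y = ZMod.stdAddChar ((reduceSnd n x).1 * (reduceSnd n y).2 +
      (reduceSnd n x).2 * (reduceSnd n y).1) := by
  have exponent_eq : (reduceSnd n x).1 * (reduceSnd n y).2 + (reduceSnd n x).2 * (reduceSnd n y).1 =
      ((x.1.val * y.2.val + x.2.val * y.1.val : ℤ) : ZMod n) := by
    simp [reduceSnd]
  rw [exponent_eq, ZMod.stdAddChar_coe, braidZpZpsq]
  push_cast
  rfl

theorem braidZpZpsq_eq_one_iff [NeZero n] {x y : ZMod n × ZMod (n ^ 2)} :
    braidZpZpsq n x y = 1 ↔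
      (reduceSnd n x).1 * (reduceSnd n y).2 + (reduceSnd n x).2 * (reduceSnd n y).1 = 0 := by
  rw [braidZpZpsq_eq_stdAddChar, ← AddChar.map_zero_eq_one (ZMod.stdAddChar (N := n)),
    ZMod.injective_stdAddChar.eq_iff]

theorem isUnit_det_reduceSnd_of_closure_pair_eq_top {b c : ZMod n × ZMod (n ^ 2)}
    (h : AddSubgroup.closure {b, c} = ⊤) :
    IsUnit ((reduceSnd n b).1 * (reduceSnd n c).2 - (reduceSnd n b).2 * (reduceSnd n c).1) := by
  have span_image : Submodule.span (ZMod n) (reduceSnd n '' {b, c}) = ⊤ :=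
    span_image_eq_top_of_addSubgroup_closure_eq_top (f := (reduceSnd n).toAddMonoidHom)
      (reduceSnd_surjective n) h
  rw [Set.image_pair] at span_image
  exact isUnit_det_of_span_pair_eq_top span_image

end ReduceSnd

theorem zp_zpsq_indecomposable_general {n : ℕ} (hn : 1 < n) {b c : ZMod n × ZMod (n ^ 2)}
    (hb : n • b = 0) (hbc : braidZpZpsq n b c = 1) : AddSubgroup.closure {b, c} ≠ ⊤ := by
  intro hgen
  have : Fact (1 < n) := ⟨hn⟩
  have : NeZero n := ⟨by lia⟩
  have b_snd : (reduceSnd n b).2 = 0 := reduceSnd_snd_eq_zero_of_nsmul_eq_zero (NeZero.ne n) hb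
  have exponent_eq_zero := braidZpZpsq_eq_one_iff.1 hbc
  have det_isUnit := isUnit_det_reduceSnd_of_closure_pair_eq_top hgen
  rw [b_snd, zero_mul, add_zero] at exponent_eq_zero
  rw [b_snd, zero_mul, sub_zero, exponent_eq_zero] at det_isUnit
  exact not_isUnit_zero det_isUnit

/-- The `ℤ_p × ℤ_{p²}` anyon theory does not decompose: there are no elements `b`
of order `p` and `c` of order `p²` that braid trivially with each other and
together generate the whole fusion group. -/
theorem zp_zpsq_indecomposable (p : ℕ) (hp : p.Prime) :
    ¬ ∃ b c : ZMod p × ZMod (p ^ 2),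
        addOrderOf b = p ∧ addOrderOf c = p ^ 2 ∧ braidZpZpsq p b c = 1 ∧
        AddSubgroup.closure ({b, c} : Set (ZMod p × ZMod (p ^ 2))) = ⊤ := by
  rintro ⟨b, c, hb, -, hbc, hgen⟩
  have p_nsmul_b : p • b = 0 := addOrderOf_dvd_iff_nsmul_eq_zero.1 hb.dvd
  exact zp_zpsq_indecomposable_general hp.one_lt p_nsmul_b hbc hgen
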